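/- Let p ∈ {2,3,4} and let f satisfy the stated structural assumption (so in particular f(0) = 0 and f'(0) = 0). Let Q : ℝ → ℝ be a C³ solution of Q'' + f(Q) = Q with Q, Q', Q'' bounded by K e^{−δ|x|}, let ΛQ be a C² function with ΛQ, ΛQ', ΛQ'' bounded by K e^{−δ|x|} satisfying −ΛQ'' + ΛQ − f'(Q)ΛQ = −Q, and let V₁ be a C² function with V₁, V₁', V₁'' bounded by K e^{−δ|x|} satisfying −V₁'' + V₁ − f'(Q)V₁ = f'(Q). Define Z₁ = 3V₁'' + f'(Q)·V₁ + f'(Q). Then ∫_ℝ Z₁(x) Q(x) dx = −∫_ℝ ΛQ(x) dx. -/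

import Mathlib

/-! Write `g = f'(Q)`. Substituting the equation of `V₁` into `Z₁` gives `Z₁ = 2V₁'' + V₁`, so
that `Z₁ Q = 2V₁Q'' + V₁Q + (boundary terms)'`. Then `Z₁ Q + ΛQ` is an exact derivative, by the
following integrations by parts:

* `L(1 + V₁) = 1` paired with `L(ΛQ) = -Q` gives `ΛQ + Q V₁ = -Q + (boundary terms)'`;
* `L(xQ') = -2Q''` (scaling) paired with `L V₁ = g` gives `2V₁Q'' = -x g Q' + (boundary terms)'`;
* `x g Q' = x (f(Q))' = -f(Q) + (x f(Q))' = -Q + (boundary terms)'`, because `f(Q) = Q - Q''`.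

Adding these up, the `Q` terms cancel. The boundary terms are products of exponentially decaying
functions with at most one factor `x`, so they vanish at infinity and the fundamental theorem of
calculus on `ℝ` concludes. -/

open MeasureTheory Filter Topology Set

noncomputable section

/-- Structural assumption on the nonlinearity: `f u = u ^ p + f₁ u` with `f₁` of class
`C^{p+4}` and `f₁ u / u ^ p → 0` as `u → 0`. -/
def IsGKdVNonlinearity (p : ℕ) (f : ℝ → ℝ) : Prop :=
  ∃ f₁ : ℝ → ℝ, (∀ u, f u = u ^ p + f₁ u) ∧ ContDiff ℝ (p + 4 : ℕ) f₁ ∧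
    Filter.Tendsto (fun u => f₁ u / u ^ p) (𝓝[≠] (0:ℝ)) (𝓝 0)

/-- `g` is bounded by `K e^{-δ|x|}` for some `K, δ > 0`. -/
def ExpBounded (g : ℝ → ℝ) : Prop :=
  ∃ K δ : ℝ, 0 < K ∧ 0 < δ ∧ ∀ x, |g x| ≤ K * Real.exp (-δ * |x|)

theorem tendsto_exp_neg_abs_cocompact {δ : ℝ} (hδ : 0 < δ) (n : ℕ) :
    Tendsto (fun x : ℝ => (δ * |x|) ^ n * Real.exp (-(δ * |x|))) (cocompact ℝ) (𝓝 0) := by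
  have h : Tendsto (fun x : ℝ => δ * |x|) (cocompact ℝ) atTop :=
    (tendsto_norm_cocompact_atTop (E := ℝ)).const_mul_atTop hδ
  exact (Real.tendsto_pow_mul_exp_neg_atTop_nhds_zero n).comp h

theorem ExpBounded.tendsto {g : ℝ → ℝ} (hg : ExpBounded g) :
    Tendsto g (cocompact ℝ) (𝓝 0) := by
  obtain ⟨K, δ, -, hδ, h⟩ := hg
  have h0 := (tendsto_exp_neg_abs_cocompact hδ 0).const_mul K
  rw [mul_zero] at h0
  refine squeeze_zero_norm (fun x => ?_) h0
  simpa [neg_mul] using h x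

theorem ExpBounded.tendsto_id_mul {g : ℝ → ℝ} (hg : ExpBounded g) :
    Tendsto (fun x => x * g x) (cocompact ℝ) (𝓝 0) := by
  obtain ⟨K, δ, -, hδ, h⟩ := hg
  have h0 := (tendsto_exp_neg_abs_cocompact hδ 1).const_mul (K / δ)
  rw [mul_zero] at h0
  refine squeeze_zero_norm (fun x => ?_) h0
  rw [Real.norm_eq_abs, abs_mul]
  calc |x| * |g x| ≤ |x| * (K * Real.exp (-δ * |x|)) := by gcongr; exact h x
    _ = _ := by
      rw [neg_mul]
      field_simp

theorem integrable_exp_neg_abs {δ : ℝ} (hδ : 0 < δ) :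
    Integrable (fun x : ℝ => Real.exp (-δ * |x|)) := by
  rw [← integrableOn_univ, ← Set.Iic_union_Ioi (a := (0 : ℝ)), integrableOn_union]
  constructor
  · refine (integrableOn_exp_mul_Iic hδ 0).congr_fun (fun x hx => ?_) measurableSet_Iic
    simp [abs_of_nonpos (Set.mem_Iic.mp hx)]
  · refine (integrableOn_exp_mul_Ioi (neg_neg_of_pos hδ) 0).congr_fun (fun x hx => ?_)
      measurableSet_Ioi
    simp [abs_of_pos (Set.mem_Ioi.mp hx)]

theorem ExpBounded.integrable {g : ℝ → ℝ} (hg : ExpBounded g) (hc : Continuous g) :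
    Integrable g := by
  obtain ⟨K, δ, -, hδ, h⟩ := hg
  exact ((integrable_exp_neg_abs hδ).const_mul K).mono' hc.aestronglyMeasurable (.of_forall h)

theorem ExpBounded.integrable_mul {g h : ℝ → ℝ} (hg : ExpBounded g) (hgc : Continuous g)
    (hh : ExpBounded h) (hhc : Continuous h) : Integrable (fun x => g x * h x) := by
  obtain ⟨K, δ, hK, hδ, hb⟩ := hg
  refine (hh.integrable hhc).bdd_mul (c := K) hgc.aestronglyMeasurable (.of_forall fun x => ?_)
  refine (hb x).trans (mul_le_of_le_one_right hK.le (Real.exp_le_one_iff.mpr ?_))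
  have := mul_nonneg hδ.le (abs_nonneg x)
  linarith

/-- The two derivatives of a `C²` function, and continuity of the second one. -/
theorem ContDiff.two_derivs {g : ℝ → ℝ} (hg : ContDiff ℝ 2 g) :
    (∀ x, HasDerivAt g (deriv g x) x) ∧ (∀ x, HasDerivAt (deriv g) (deriv (deriv g) x) x) ∧
      Continuous (deriv (deriv g)) := by
  have h1 : ContDiff ℝ 1 (deriv g) := hg.iterate_deriv' 1 1
  have h2 : ContDiff ℝ 0 (deriv (deriv g)) := h1.iterate_deriv' 0 1
  exact ⟨fun x => (hg.differentiable (by norm_num) x).hasDerivAt,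
    fun x => (h1.differentiable (by norm_num) x).hasDerivAt, h2.continuous⟩

theorem IsGKdVNonlinearity.differentiable {p : ℕ} {f : ℝ → ℝ} (hf : IsGKdVNonlinearity p f) :
    Differentiable ℝ f := by
  obtain ⟨f₁, hf₁, hreg, -⟩ := hf
  rw [show f = fun u => u ^ p + f₁ u from funext hf₁]
  exact (differentiable_pow p).add (hreg.differentiable (by norm_cast))

/-- Identity `∫ Z₁ Q = -∫ ΛQ`. -/
theorem identity_Z1
    (p : ℕ) (hp : p = 2 ∨ p = 3 ∨ p = 4)
    (f : ℝ → ℝ) (hf : IsGKdVNonlinearity p f)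
    (Q : ℝ → ℝ) (hQreg : ContDiff ℝ 3 Q)
    (hQeq : ∀ x, deriv (deriv Q) x + f (Q x) = Q x)
    (hQb : ExpBounded Q) (hQ'b : ExpBounded (deriv Q))
    (hQ''b : ExpBounded (deriv (deriv Q)))
    (ΛQ : ℝ → ℝ) (hΛreg : ContDiff ℝ 2 ΛQ)
    (hΛb : ExpBounded ΛQ) (hΛ'b : ExpBounded (deriv ΛQ))
    (hΛ''b : ExpBounded (deriv (deriv ΛQ)))
    (hΛeq : ∀ x, -(deriv (deriv ΛQ) x) + ΛQ x - deriv f (Q x) * ΛQ x = -Q x)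
    (V₁ : ℝ → ℝ) (hV₁reg : ContDiff ℝ 2 V₁)
    (hV₁b : ExpBounded V₁) (hV₁'b : ExpBounded (deriv V₁))
    (hV₁''b : ExpBounded (deriv (deriv V₁)))
    (hV₁eq : ∀ x, -(deriv (deriv V₁) x) + V₁ x - deriv f (Q x) * V₁ x = deriv f (Q x))
    (Z₁ : ℝ → ℝ)
    (hZ₁ : ∀ x, Z₁ x = 3 * deriv (deriv V₁) x + deriv f (Q x) * V₁ x + deriv f (Q x)) :
    ∫ x : ℝ, Z₁ x * Q x = -∫ x : ℝ, ΛQ x := by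
  obtain ⟨dQ, dQ', cQ''⟩ := (hQreg.of_le (by norm_num) : ContDiff ℝ 2 Q).two_derivs
  obtain ⟨dΛ, dΛ', -⟩ := hΛreg.two_derivs
  obtain ⟨dV, dV', cV''⟩ := hV₁reg.two_derivs
  have dQ'' : ∀ x, HasDerivAt (deriv (deriv Q)) (deriv Q x - deriv f (Q x) * deriv Q x) x := by
    intro x
    rw [show deriv (deriv Q) = fun x => Q x - f (Q x) from
      funext fun x => eq_sub_of_add_eq (hQeq x)]
    exact (dQ x).sub ((hf.differentiable (Q x)).hasDerivAt.comp x (dQ x))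
  have hZ : ∀ x, Z₁ x * Q x = 2 * (deriv (deriv V₁) x * Q x) + V₁ x * Q x := by
    intro x
    linear_combination Q x * hZ₁ x - Q x * hV₁eq x
  have iZ : Integrable (fun x => Z₁ x * Q x) := by
    simp_rw [hZ]
    exact ((hV₁''b.integrable_mul cV'' hQb hQreg.continuous).const_mul 2).add
      (hV₁b.integrable_mul hV₁reg.continuous hQb hQreg.continuous)
  have iΛ : Integrable ΛQ := hΛb.integrable hΛreg.continuous
  -- The sum of all boundary terms; its derivative is `Z₁ Q + ΛQ`.
  set W : ℝ → ℝ := fun x =>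
    2 * (deriv V₁ x * Q x - V₁ x * deriv Q x)
      + (deriv ΛQ x * V₁ x - ΛQ x * deriv V₁ x + deriv ΛQ x)
      - deriv V₁ x * (x * deriv Q x) + V₁ x * (deriv Q x + x * deriv (deriv Q) x)
      - x * Q x + x * deriv (deriv Q) x - deriv Q x
  have dW : ∀ x, HasDerivAt W (Z₁ x * Q x + ΛQ x) x := by
    intro x
    have hx := hasDerivAt_id' x
    have h := (((((((((dV' x).mul (dQ x)).sub ((dV x).mul (dQ' x))).const_mul 2).add
      ((((dΛ' x).mul (dV x)).sub ((dΛ x).mul (dV' x))).add (dΛ' x))).sub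
      ((dV' x).mul (hx.mul (dQ' x)))).add
      ((dV x).mul ((dQ' x).add (hx.mul (dQ'' x))))).sub
      (hx.mul (dQ x))).add (hx.mul (dQ'' x))).sub (dQ' x)
    refine h.congr_deriv ?_
    rw [hZ x]
    simp only [Pi.mul_apply, Pi.add_apply]
    linear_combination (ΛQ x + x * deriv Q x) * hV₁eq x - (V₁ x + 1) * hΛeq x
  have tW : Tendsto W (cocompact ℝ) (𝓝 0) := by
    have tQ := hQb.tendsto
    have tQ' := hQ'b.tendsto
    have tV := hV₁b.tendsto
    have tV' := hV₁'b.tendsto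
    have tΛ := hΛb.tendsto
    have tΛ' := hΛ'b.tendsto
    have txQ := hQb.tendsto_id_mul
    have txQ' := hQ'b.tendsto_id_mul
    have txQ'' := hQ''b.tendsto_id_mul
    have h := ((((((((tV'.mul tQ).sub (tV.mul tQ')).const_mul 2).add
      (((tΛ'.mul tV).sub (tΛ.mul tV')).add tΛ')).sub
      (tV'.mul txQ')).add (tV.mul (tQ'.add txQ''))).sub txQ).add txQ'').sub tQ'
    simpa using h
  rw [cocompact_eq_atBot_atTop, tendsto_sup] at tW
  have key := integral_of_hasDerivAt_of_tendsto dW (iZ.add iΛ) tW.1 tW.2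
  rw [integral_add iZ iΛ] at key
  linarith
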